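/- arXiv:2508.00747 — 2 statements merged into one kernel-verified Lean document; each statement's English description precedes it below -/
import Mathlib

section
/- Let M be a finite-dimensional, connected, complete, smooth Riemannian manifold, U ⊆ M open, (Ω, ν) a measurable space with a finite measure, and b : Ω → ℝ integrable with b_Ω := ∫_Ω b(ω) dν(ω). Suppose for each ω ∈ Ω a function G_ω : U → ℝ is given such that ω ↦ G_ω(q) is integrable for every q ∈ U and G_ω is b(ω)-concave. Then f(q) := ∫_Ω G_ω(q) dν(ω) is b_Ω-concave on U, and its directional differential satisfies D_q f(v) = ∫_Ω D_q(G_ω)(v) dν(ω) for all q ∈ U and v ∈ T_qM. -/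
open MeasureTheory Metric Set Filter
open scoped Topology ENNReal NNReal

noncomputable section

/-- An abstraction of a finite-dimensional smooth Riemannian manifold structure on a
metric space `M` (whose distance is the geodesic distance): the tangent space at every
point is identified with `EuclideanSpace ℝ (Fin n)` via an orthonormal frame, `exp` is
the Riemann exponential map, `IsCkOn` is the `C^k` regularity predicate for real valued
functions on open subsets, and `laplacian` is the Laplace–Beltrami operator.  The axioms
record basic facts tying these data together. -/
structure RiemannianManifold (n : ℕ) (M : Type) [MetricSpace M] where
  /-- the Riemann exponential map `exp q : T_qM → M` -/
  exp : M → EuclideanSpace ℝ (Fin n) → M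
  exp_zero : ∀ q : M, exp q 0 = q
  /-- the geodesic `t ↦ exp q (t • v)` has speed at most `‖v‖` -/
  dist_exp_exp_le : ∀ (q : M) (v : EuclideanSpace ℝ (Fin n)) (s t : ℝ),
    dist (exp q (s • v)) (exp q (t • v)) ≤ |s - t| * ‖v‖
  /-- Hopf–Rinow: by completeness, any two points are joined by a minimizing geodesic -/
  exists_minimal_geodesic : ∀ q x : M, ∃ v : EuclideanSpace ℝ (Fin n),
    ‖v‖ = dist q x ∧ exp q v = x
  /-- a vector realizing the distance determines a minimizing geodesic -/
  dist_exp_of_min : ∀ (q x : M) (v : EuclideanSpace ℝ (Fin n)), exp q v = x →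
    ‖v‖ = dist q x → ∀ t ∈ Set.Icc (0:ℝ) 1, dist q (exp q (t • v)) = t * dist q x
  /-- the `C^k` regularity predicate for real valued functions on subsets of `M` -/
  IsCkOn : ℕ∞ → (M → ℝ) → Set M → Prop
  /-- the Laplace–Beltrami operator, evaluated at a point -/
  laplacian : (M → ℝ) → M → ℝ
  /-- a `C²` function with a local minimum at `q` has nonnegative Laplacian at `q` -/
  laplacian_nonneg_of_isLocalMin : ∀ (f : M → ℝ) (q : M) (r : ℝ), 0 < r →
    IsCkOn 2 f (Metric.ball q r) → (∀ y ∈ Metric.ball q r, f q ≤ f y) →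
    0 ≤ laplacian f q

namespace RiemannianManifold

variable {n : ℕ} {M : Type} [MetricSpace M]

/-- `C⁺_q`: the set of points joined to `q` by at least two distinct minimizing
geodesics (every minimizing geodesic from `q` to `x` is `t ↦ exp q (t • v)` for a
vector `v` with `exp q v = x` and `‖v‖ = d(q,x)`). -/
def cutLocusPlus (R : RiemannianManifold n M) (q : M) : Set M :=
  {x | ∃ v w : EuclideanSpace ℝ (Fin n), v ≠ w ∧
    ‖v‖ = dist q x ∧ R.exp q v = x ∧ ‖w‖ = dist q x ∧ R.exp q w = x}

/-- the cut locus of `q` : the closure of `C⁺_q` in `M` -/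
def cutLocus (R : RiemannianManifold n M) (q : M) : Set M :=
  closure (R.cutLocusPlus q)

/-- `f` has one-sided directional derivative `L` at `q` in direction `w`, i.e.
`(f (exp_q (t • w)) - f q)/t → L` as `t ↘ 0`. -/
def HasDirDeriv (R : RiemannianManifold n M) (f : M → ℝ) (q : M)
    (w : EuclideanSpace ℝ (Fin n)) (L : ℝ) : Prop :=
  Tendsto (fun t : ℝ => (f (R.exp q (t • w)) - f q) / t) (𝓝[>] (0:ℝ)) (𝓝 L)

/-- the one-sided directional differential `D_q f : T_qM → ℝ` exists and is a linear
map; equivalently, `f` is differentiable at `q` in the classical sense -/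
def DirDerivLinear (R : RiemannianManifold n M) (f : M → ℝ) (q : M) : Prop :=
  ∃ L : EuclideanSpace ℝ (Fin n) →ₗ[ℝ] ℝ, ∀ w, R.HasDirDeriv f q w (L w)

/-- `f` is `b`-concave on `U`: along every geodesic `t ↦ exp q (t • v)` lying in `U`,
the function `t ↦ f (exp q (t • v)) - (1/2) b t² ‖v‖²` is concave. -/
def BConcaveOn (R : RiemannianManifold n M) (b : ℝ) (f : M → ℝ) (U : Set M) : Prop :=
  ∀ q ∈ U, ∀ (v : EuclideanSpace ℝ (Fin n)) (a c : ℝ),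
    (∀ t ∈ Set.Icc a c, R.exp q (t • v) ∈ U) →
    ConcaveOn ℝ (Set.Icc a c)
      (fun t : ℝ => f (R.exp q (t • v)) - b / 2 * t ^ 2 * ‖v‖ ^ 2)

/-- `Δ_q f < C` in the barrier sense, for a function defined (at least) on `U`: there is
`r > 0` with `B_r(q) ⊆ U` and a `C²` function `h : B_r(q) → ℝ` with `h q = f q`,
`h ≥ f` on `B_r(q)` and `Δ h (q) < C`. -/
def LaplacianLtBarrier (R : RiemannianManifold n M) (f : M → ℝ) (q : M) (C : ℝ)
    (U : Set M) : Prop :=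
  ∃ r > 0, Metric.ball q r ⊆ U ∧ ∃ h : M → ℝ, R.IsCkOn 2 h (Metric.ball q r) ∧
    h q = f q ∧ (∀ y ∈ Metric.ball q r, f y ≤ h y) ∧ R.laplacian h q < C

end RiemannianManifold

/-- the Fréchet function of the distribution `P` of a random variable on `M` -/
def frechetFn {M : Type} [MetricSpace M] [MeasurableSpace M] (P : Measure M) (q : M) : ℝ :=
  ∫ x, dist x q ^ 2 ∂P
/-- A concave function on `[-δ, δ]` has a right derivative at `0`, and its difference
quotients on `(0, δ]` are squeezed between the ones at `δ` and `-δ`. -/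
theorem concave_quotient_aux (g : ℝ → ℝ) (δ : ℝ) (hδ : 0 < δ)
    (hg : ConcaveOn ℝ (Set.Icc (-δ) δ) g) :
    (∃ D : ℝ, Tendsto (fun t : ℝ => (g t - g 0) / t) (𝓝[>] (0:ℝ)) (𝓝 D)) ∧
    ∀ t ∈ Set.Ioc 0 δ, |(g t - g 0) / t| ≤ |(g δ - g 0) / δ| + |(g 0 - g (-δ)) / δ| := by
  constructor
  · have h0 : (0:ℝ) ∈ interior (Set.Icc (-δ) δ) := by
      rw [interior_Icc]; constructor <;> linarith
    have h := (hg.neg.hasDerivWithinAt_rightDeriv_of_mem_interior h0).neg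
    rw [neg_neg, hasDerivWithinAt_iff_tendsto_slope' self_notMem_Ioi] at h
    refine ⟨_, h.congr fun t => ?_⟩
    simp [slope_def_field]
  · rintro t ⟨ht0, htδ⟩
    have hmono := hg.slope_anti (x := 0) ⟨by linarith, by linarith⟩
    have h1 := hmono (a := t) (b := δ) ⟨⟨by linarith, htδ⟩, ht0.ne'⟩
      ⟨⟨by linarith, le_rfl⟩, hδ.ne'⟩ htδ
    have h2 := hmono (a := -δ) (b := t) ⟨⟨le_rfl, by linarith⟩, by simpa using hδ.ne'⟩
      ⟨⟨by linarith, htδ⟩, ht0.ne'⟩ (by linarith)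
    simp only [slope_def_field, sub_zero] at h1 h2
    have h3 : (g (-δ) - g 0) / -δ = (g 0 - g (-δ)) / δ := by
      rw [div_neg, ← neg_div, neg_sub]
    rw [h3] at h2
    rw [abs_le]
    constructor
    · linarith [neg_abs_le ((g δ - g 0) / δ), abs_nonneg ((g 0 - g (-δ)) / δ)]
    · linarith [le_abs_self ((g 0 - g (-δ)) / δ), abs_nonneg ((g δ - g 0) / δ)]

/-- Integrals of `b(ω)`-concave functions over a finite measure space are
`(∫ b)`-concave, and the directional differential of the integral is the integral of
the directional differentials. -/
theorem integral_bConcave_and_dirDeriv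
    {n : ℕ} {M : Type} [MetricSpace M] [ConnectedSpace M] [CompleteSpace M]
    (R : RiemannianManifold n M) {U : Set M} (hU : IsOpen U)
    {Ω : Type} [MeasurableSpace Ω] (ν : Measure Ω) [IsFiniteMeasure ν]
    (b : Ω → ℝ) (hb : Integrable b ν)
    (G : Ω → M → ℝ)
    (hGint : ∀ q ∈ U, Integrable (fun ω => G ω q) ν)
    (hGconc : ∀ ω : Ω, R.BConcaveOn (b ω) (G ω) U) :
    R.BConcaveOn (∫ ω, b ω ∂ν) (fun q => ∫ ω, G ω q ∂ν) U ∧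
    ∀ q ∈ U, ∀ v : EuclideanSpace ℝ (Fin n), ∃ D : Ω → ℝ,
      (∀ ω : Ω, R.HasDirDeriv (G ω) q v (D ω)) ∧
      Integrable D ν ∧
      R.HasDirDeriv (fun y => ∫ ω, G ω y ∂ν) q v (∫ ω, D ω ∂ν) := by
  constructor
  · intro q hq v a c hmem
    have hint : ∀ t ∈ Set.Icc a c, Integrable
        (fun ω => G ω (R.exp q (t • v)) - b ω / 2 * t ^ 2 * ‖v‖ ^ 2) ν := fun t ht =>
      (hGint _ (hmem t ht)).sub (((hb.div_const 2).mul_const _).mul_const _)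
    have heq : ∀ t ∈ Set.Icc a c,
        (∫ ω, G ω (R.exp q (t • v)) ∂ν) - (∫ ω, b ω ∂ν) / 2 * t ^ 2 * ‖v‖ ^ 2
          = ∫ ω, (G ω (R.exp q (t • v)) - b ω / 2 * t ^ 2 * ‖v‖ ^ 2) ∂ν := by
      intro t ht
      rw [integral_sub (hGint _ (hmem t ht)) (((hb.div_const 2).mul_const _).mul_const _),
        integral_mul_const, integral_mul_const, integral_div]
    refine ⟨convex_Icc a c, ?_⟩
    intro x hx y hy α β hα hβ hαβ
    have hz := convex_Icc a c hx hy hα hβ hαβ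
    beta_reduce
    rw [heq x hx, heq y hy, heq _ hz, smul_eq_mul, smul_eq_mul, ← integral_const_mul,
      ← integral_const_mul,
      ← integral_add ((hint x hx).const_mul α) ((hint y hy).const_mul β)]
    refine integral_mono (((hint x hx).const_mul α).add ((hint y hy).const_mul β))
      (hint _ hz) fun ω => ?_
    exact (hGconc ω q hq v a c hmem).2 hx hy hα hβ hαβ
  · intro q hq v
    obtain ⟨r, hr, hball⟩ := Metric.isOpen_iff.1 hU q hq
    set δ : ℝ := r / (2 * (‖v‖ + 1)) with hδdef
    have hv1 : 0 < ‖v‖ + 1 := by positivity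
    have hδ : 0 < δ := by positivity
    have hδr : δ * (‖v‖ + 1) = r / 2 := by rw [hδdef]; field_simp
    have hmem : ∀ t ∈ Set.Icc (-δ) δ, R.exp q (t • v) ∈ U := by
      intro t ht
      apply hball
      have h := R.dist_exp_exp_le q v t 0
      rw [zero_smul, R.exp_zero, sub_zero] at h
      have h2 : |t| * ‖v‖ ≤ δ * ‖v‖ :=
        mul_le_mul_of_nonneg_right (abs_le.2 ht) (norm_nonneg v)
      rw [Metric.mem_ball]
      nlinarith
    have hpδ : δ ∈ Set.Icc (-δ) δ := ⟨by linarith, le_rfl⟩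
    have hnδ : -δ ∈ Set.Icc (-δ) δ := ⟨le_rfl, by linarith⟩
    have h0δ : (0:ℝ) ∈ Set.Icc (-δ) δ := ⟨by linarith, by linarith⟩
    let g : Ω → ℝ → ℝ := fun ω t => G ω (R.exp q (t • v)) - b ω / 2 * t ^ 2 * ‖v‖ ^ 2
    have hgint : ∀ t ∈ Set.Icc (-δ) δ, Integrable (fun ω => g ω t) ν := fun t ht =>
      (hGint _ (hmem t ht)).sub (((hb.div_const 2).mul_const _).mul_const _)
    have haux := fun ω => concave_quotient_aux (g ω) δ hδ (hGconc ω q hq v (-δ) δ hmem)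
    choose D hD using fun ω => (haux ω).1
    have hquot : ∀ ω : Ω, ∀ t : ℝ, 0 < t → (G ω (R.exp q (t • v)) - G ω q) / t =
        (g ω t - g ω 0) / t + b ω / 2 * t * ‖v‖ ^ 2 := by
      intro ω t ht
      simp only [g, zero_smul, R.exp_zero]
      field_simp
      ring
    have hDG : ∀ ω : Ω, R.HasDirDeriv (G ω) q v (D ω) := by
      intro ω
      have h1 : Tendsto (fun t : ℝ => b ω / 2 * t * ‖v‖ ^ 2) (𝓝[>] (0:ℝ)) (𝓝 0) := by
        have : Continuous (fun t : ℝ => b ω / 2 * t * ‖v‖ ^ 2) := by fun_prop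
        simpa using (this.tendsto 0).mono_left nhdsWithin_le_nhds
      have h2 := (hD ω).add h1
      rw [add_zero] at h2
      refine h2.congr' ?_
      filter_upwards [self_mem_nhdsWithin] with t ht
      exact (hquot ω t ht).symm
    have hev : ∀ᶠ t in 𝓝[>] (0:ℝ), t ∈ Set.Ioc 0 δ := Ioc_mem_nhdsGT hδ
    have hIcc : ∀ t ∈ Set.Ioc 0 δ, t ∈ Set.Icc (-δ) δ := fun t ht =>
      ⟨by linarith [ht.1], ht.2⟩
    let B : Ω → ℝ := fun ω => |(g ω δ - g ω 0) / δ| + |(g ω 0 - g ω (-δ)) / δ|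
    have hBint : Integrable B ν :=
      ((((hgint δ hpδ).sub (hgint 0 h0δ)).div_const δ).abs).add
        ((((hgint 0 h0δ).sub (hgint (-δ) hnδ)).div_const δ).abs)
    have hDmeas : AEStronglyMeasurable D ν := by
      refine aestronglyMeasurable_of_tendsto_ae (atTop : Filter ℕ)
        (f := fun k ω => (g ω (δ / (k + 1)) - g ω 0) / (δ / (k + 1))) (fun k => ?_)
        (Eventually.of_forall fun ω => ?_)
      · have hk : δ / ((k:ℝ) + 1) ∈ Set.Ioc 0 δ :=
          ⟨by positivity, div_le_self hδ.le (by linarith [Nat.cast_nonneg (α := ℝ) k])⟩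
        exact (((hgint _ (hIcc _ hk)).sub (hgint 0 h0δ)).div_const _).aestronglyMeasurable
      · refine (hD ω).comp (tendsto_nhdsWithin_iff.2 ⟨?_, Eventually.of_forall fun k => ?_⟩)
        · have := (tendsto_one_div_add_atTop_nhds_zero_nat (𝕜 := ℝ)).const_mul δ
          simpa [div_eq_mul_inv] using this
        · show 0 < δ / ((k:ℝ) + 1)
          positivity
    have hDint : Integrable D ν := by
      refine hBint.mono' hDmeas (Eventually.of_forall fun ω => ?_)
      refine le_of_tendsto (hD ω).norm ?_
      filter_upwards [hev] with t ht
      exact (haux ω).2 t ht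
    refine ⟨D, hDG, hDint, ?_⟩
    have hlim : Tendsto (fun t : ℝ => ∫ ω, (G ω (R.exp q (t • v)) - G ω q) / t ∂ν)
        (𝓝[>] (0:ℝ)) (𝓝 (∫ ω, D ω ∂ν)) := by
      refine tendsto_integral_filter_of_dominated_convergence
        (fun ω => B ω + |b ω| / 2 * δ * ‖v‖ ^ 2) ?_ ?_
        (hBint.add (((hb.abs.div_const 2).mul_const _).mul_const _))
        (Eventually.of_forall hDG)
      · filter_upwards [hev] with t ht
        exact (((hGint _ (hmem t (hIcc t ht))).sub (hGint q hq)).div_const t).aestronglyMeasurable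
      · filter_upwards [hev] with t ht
        refine Eventually.of_forall fun ω => ?_
        rw [hquot ω t ht.1]
        refine (norm_add_le _ _).trans (add_le_add ((haux ω).2 t ht) ?_)
        rw [Real.norm_eq_abs, abs_mul, abs_mul, abs_div, abs_of_pos ht.1, abs_two,
          abs_of_nonneg (sq_nonneg ‖v‖)]
        have := ht.2
        gcongr
    refine hlim.congr' ?_
    filter_upwards [hev] with t ht
    rw [integral_div, integral_sub (hGint _ (hmem t (hIcc t ht))) (hGint q hq)]
end
end

section
/- Let M be a finite-dimensional, connected, complete, smooth Riemannian manifold, U ⊆ M open, and b, s, L > 0. If f : U → ℝ is b-concave, L-Lipschitz, nonnegative, and bounded from above by s, then the function f² is 2(s·b + L²)-concave on U. -/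
open MeasureTheory Metric Set Filter
open scoped Topology ENNReal NNReal

noncomputable section

/-- If `f : U → ℝ` is `b`-concave, `L`-Lipschitz, nonnegative and bounded above by
`s` (with `b, s, L > 0`), then `f²` is `2(s b + L²)`-concave on `U`. -/
theorem sq_of_bConcave_lipschitz_bounded
    {n : ℕ} {M : Type} [MetricSpace M] [ConnectedSpace M] [CompleteSpace M]
    (R : RiemannianManifold n M) {U : Set M} (hU : IsOpen U)
    {b s L : ℝ} (hb : 0 < b) (hs : 0 < s) (hL : 0 < L) {f : M → ℝ}
    (hconc : R.BConcaveOn b f U)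
    (hLip : ∀ x ∈ U, ∀ y ∈ U, |f x - f y| ≤ L * dist x y)
    (hnonneg : ∀ x ∈ U, 0 ≤ f x)
    (hbdd : ∀ x ∈ U, f x ≤ s) :
    R.BConcaveOn (2 * (s * b + L ^ 2)) (fun y => f y ^ 2) U := by
  intro q hq v a c hin
  have h := hconc q hq v a c hin
  refine ⟨convex_Icc a c, ?_⟩
  intro x hx y hy α β hα hβ hαβ
  have h1 := h.2 hx hy hα hβ hαβ
  have hz := (convex_Icc a c) hx hy hα hβ hαβ
  simp only [smul_eq_mul] at h1 hz ⊢
  have hl := (hLip _ (hin x hx) _ (hin y hy)).trans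
    (mul_le_mul_of_nonneg_left (R.dist_exp_exp_le q v x y) hL.le)
  have hX1 := hbdd _ (hin x hx)
  have hY1 := hbdd _ (hin y hy)
  have hZ0 := hnonneg _ (hin _ hz)
  have hZ1 := hbdd _ (hin _ hz)
  have hX0 := hnonneg _ (hin x hx)
  have hY0 := hnonneg _ (hin y hy)
  generalize f (R.exp q (x • v)) = X at *
  generalize f (R.exp q (y • v)) = Y at *
  generalize f (R.exp q ((α * x + β * y) • v)) = Z at *
  generalize ‖v‖ = N at *
  have hsq : (X - Y) ^ 2 ≤ L ^ 2 * (x - y) ^ 2 * N ^ 2 := by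
    have h2 := pow_le_pow_left₀ (abs_nonneg _) hl 2
    rw [sq_abs, mul_pow, mul_pow, sq_abs] at h2
    linarith
  obtain rfl : β = 1 - α := by linarith
  have hab : 0 ≤ α * (1 - α) := mul_nonneg hα hβ
  have hsq' := mul_le_mul_of_nonneg_left hsq hab
  set m := α * X + (1 - α) * Y with hm
  set e := b / 2 * (α * (1 - α)) * (x - y) ^ 2 * N ^ 2 with he
  have he0 : 0 ≤ e := by positivity
  have hZ : m - e ≤ Z := by
    rw [hm, he]
    linarith
  have hm0 : 0 ≤ m := add_nonneg (mul_nonneg hα hX0) (mul_nonneg hβ hY0)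
  have hms : m ≤ s := by
    have := mul_le_mul_of_nonneg_left hX1 hα
    have := mul_le_mul_of_nonneg_left hY1 hβ
    rw [hm]
    linarith
  have key : m ^ 2 - 2 * s * e ≤ Z ^ 2 := by
    rcases le_total m Z with hmZ | hmZ
    · have := mul_nonneg hs.le he0
      nlinarith
    · have h3 : (m - Z) * (m + Z) ≤ e * (2 * s) :=
        mul_le_mul (by linarith) (by linarith) (by linarith) he0
      linarith
  have hvar : α * X ^ 2 + (1 - α) * Y ^ 2 = m ^ 2 + α * (1 - α) * (X - Y) ^ 2 := by
    rw [hm]; ring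
  have hse : 2 * s * e = s * b * (α * (1 - α)) * (x - y) ^ 2 * N ^ 2 := by
    rw [he]; ring
  linarith
end
end
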